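/- arXiv:1908.03066 — 2 statements merged into one kernel-verified Lean document; each statement's English description precedes it below -/
import Mathlib

section
/- Let x ∈ ℝ³, let R be a linear isometry of ℝ³ (equivalently an orthogonal 3×3 matrix), and let r : (0,π) × ℝ → ℝ be a continuously differentiable function with r > 0. Define u(ω,φ) = (sin ω cos φ, sin ω sin φ, cos ω) and y(ω,φ) = x + r(ω,φ) · R u(ω,φ). Then the norm of the cross product of the partial derivatives of y satisfies ‖∂_ω y(ω,φ) × ∂_φ y(ω,φ)‖ = r(ω,φ) √( sin²ω ( r(ω,φ)² + (∂_ω r(ω,φ))² ) + (∂_φ r(ω,φ))² ) for all ω ∈ (0,π) and φ ∈ ℝ. -/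
/-!
The translation `x` disappears on differentiation, and `∂_ω y`, `∂_φ y` are the images under `R` of
`r ∂_ω u + (∂_ω r) u` and `r ∂_φ u + (∂_φ r) u`. By Lagrange's identity (`norm_cross3_sq`), the
squared norm of a cross product is the Gram determinant of its factors, which `R` preserves. Since
`u`, `∂_ω u`, `∂_φ u` are orthogonal with lengths `1`, `1`, `sin ω`, the Gram matrix is explicit
(`gram_sphDir`), with determinant `r² (sin² ω (r² + (∂_ω r)²) + (∂_φ r)²)`; it remains to take
square roots, using `r > 0`.
-/

open Real

noncomputable section

/-- The cross product of two vectors of `ℝ³` (as `EuclideanSpace ℝ (Fin 3)`). -/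
def cross3 (u v : EuclideanSpace ℝ (Fin 3)) : EuclideanSpace ℝ (Fin 3) :=
  (EuclideanSpace.equiv (Fin 3) ℝ).symm
    ![u 1 * v 2 - u 2 * v 1, u 2 * v 0 - u 0 * v 2, u 0 * v 1 - u 1 * v 0]

/-- The spherical direction vector `u(ω,φ) = (sin ω cos φ, sin ω sin φ, cos ω)`. -/
def sphDir (ω φ : ℝ) : EuclideanSpace ℝ (Fin 3) :=
  (EuclideanSpace.equiv (Fin 3) ℝ).symm
    ![Real.sin ω * Real.cos φ, Real.sin ω * Real.sin φ, Real.cos ω]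

/-- The vector `∂_ω u(ω,φ)`, where `u` is the spherical direction `sphDir`. -/
def sphDirPolar (ω φ : ℝ) : EuclideanSpace ℝ (Fin 3) :=
  (EuclideanSpace.equiv (Fin 3) ℝ).symm
    ![Real.cos ω * Real.cos φ, Real.cos ω * Real.sin φ, -Real.sin ω]

/-- The vector `∂_φ u(ω,φ)`, where `u` is the spherical direction `sphDir`; its length is
`|sin ω|`. -/
def sphDirAzimuth (ω φ : ℝ) : EuclideanSpace ℝ (Fin 3) :=
  (EuclideanSpace.equiv (Fin 3) ℝ).symm
    ![-(Real.sin ω * Real.sin φ), Real.sin ω * Real.cos φ, 0]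

/-- Lagrange's identity. -/
lemma norm_cross3_sq (a b : EuclideanSpace ℝ (Fin 3)) :
    ‖cross3 a b‖ ^ 2 = ‖a‖ ^ 2 * ‖b‖ ^ 2 - inner ℝ a b ^ 2 := by
  simp only [EuclideanSpace.real_norm_sq_eq, PiLp.inner_apply, Fin.sum_univ_three, cross3]
  simp
  ring

/-- A linear isometry preserves the norm of the cross product, whatever its orientation. -/
lemma norm_cross3_map_sq (R : EuclideanSpace ℝ (Fin 3) ≃ₗᵢ[ℝ] EuclideanSpace ℝ (Fin 3))
    (a b : EuclideanSpace ℝ (Fin 3)) :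
    ‖cross3 (R a) (R b)‖ ^ 2 = ‖a‖ ^ 2 * ‖b‖ ^ 2 - inner ℝ a b ^ 2 := by
  rw [norm_cross3_sq, R.norm_map, R.norm_map, R.inner_map_map]

lemma hasDerivAt_sphDir_polar (ω φ : ℝ) :
    HasDerivAt (fun w => sphDir w φ) (sphDirPolar ω φ) ω := by
  refine (EuclideanSpace.equiv (Fin 3) ℝ).symm.hasFDerivAt.comp_hasDerivAt ω
    (hasDerivAt_pi.2 fun i => ?_)
  fin_cases i
  · exact (Real.hasDerivAt_sin ω).mul_const _
  · exact (Real.hasDerivAt_sin ω).mul_const _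
  · exact Real.hasDerivAt_cos ω

lemma hasDerivAt_sphDir_azimuth (ω φ : ℝ) :
    HasDerivAt (fun p => sphDir ω p) (sphDirAzimuth ω φ) φ := by
  refine (EuclideanSpace.equiv (Fin 3) ℝ).symm.hasFDerivAt.comp_hasDerivAt φ
    (hasDerivAt_pi.2 fun i => ?_)
  fin_cases i
  · simpa using (Real.hasDerivAt_cos φ).const_mul (Real.sin ω)
  · exact (Real.hasDerivAt_sin φ).const_mul _
  · exact hasDerivAt_const φ _

/-- The Gram determinant of `∂_ω (ρ u) = A u + ρ ∂_ω u` and `∂_φ (ρ u) = B u + ρ ∂_φ u`.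
The three vectors `u`, `∂_ω u`, `∂_φ u` are orthogonal with lengths `1`, `1`, `|sin ω|`. -/
lemma gram_sphDir (ρ A B ω φ : ℝ) :
    ‖ρ • sphDirPolar ω φ + A • sphDir ω φ‖ ^ 2 * ‖ρ • sphDirAzimuth ω φ + B • sphDir ω φ‖ ^ 2 -
      inner ℝ (ρ • sphDirPolar ω φ + A • sphDir ω φ)
        (ρ • sphDirAzimuth ω φ + B • sphDir ω φ) ^ 2 =
      ρ ^ 2 * (Real.sin ω ^ 2 * (ρ ^ 2 + A ^ 2) + B ^ 2) := by
  have hω := Real.sin_sq_add_cos_sq ω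
  have hφ := Real.sin_sq_add_cos_sq φ
  have h1 : ‖ρ • sphDirPolar ω φ + A • sphDir ω φ‖ ^ 2 = ρ ^ 2 + A ^ 2 := by
    simp only [EuclideanSpace.real_norm_sq_eq, Fin.sum_univ_three, sphDir, sphDirPolar]
    simp
    linear_combination (ρ * Real.cos ω + A * Real.sin ω) ^ 2 * hφ + (ρ ^ 2 + A ^ 2) * hω
  have h2 : ‖ρ • sphDirAzimuth ω φ + B • sphDir ω φ‖ ^ 2 = ρ ^ 2 * Real.sin ω ^ 2 + B ^ 2 := by
    simp only [EuclideanSpace.real_norm_sq_eq, Fin.sum_univ_three, sphDir, sphDirAzimuth]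
    simp
    linear_combination (ρ ^ 2 + B ^ 2) * Real.sin ω ^ 2 * hφ + B ^ 2 * hω
  have h3 : inner ℝ (ρ • sphDirPolar ω φ + A • sphDir ω φ)
      (ρ • sphDirAzimuth ω φ + B • sphDir ω φ) = A * B := by
    simp only [PiLp.inner_apply, Fin.sum_univ_three, sphDir, sphDirPolar, sphDirAzimuth]
    simp
    linear_combination (ρ * Real.cos ω + A * Real.sin ω) * B * Real.sin ω * hφ + A * B * hω
  rw [h1, h2, h3]
  ring

/-- For a `C¹` positive radial function `r` on `(0,π) × ℝ`, a vertex `x` and a linear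
isometry `R`, the parametrization `y(ω,φ) = x + r(ω,φ) R u(ω,φ)` satisfies
`‖∂_ω y × ∂_φ y‖ = r √(sin²ω (r² + (∂_ω r)²) + (∂_φ r)²)`. -/
theorem stmt10 (x : EuclideanSpace ℝ (Fin 3))
    (R : EuclideanSpace ℝ (Fin 3) ≃ₗᵢ[ℝ] EuclideanSpace ℝ (Fin 3))
    (r : ℝ → ℝ → ℝ)
    (hC1 : ContDiffOn ℝ 1 (fun p : ℝ × ℝ => r p.1 p.2) (Set.Ioo 0 π ×ˢ Set.univ))
    (hpos : ∀ ω ∈ Set.Ioo 0 π, ∀ φ : ℝ, 0 < r ω φ)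
    (ω : ℝ) (hω : ω ∈ Set.Ioo 0 π) (φ : ℝ) :
    ‖cross3
        (deriv (fun w => x + r w φ • R (sphDir w φ)) ω)
        (deriv (fun p => x + r ω p • R (sphDir ω p)) φ)‖ =
      r ω φ * Real.sqrt (Real.sin ω ^ 2 * (r ω φ ^ 2 + deriv (fun w => r w φ) ω ^ 2) +
        deriv (fun p => r ω p) φ ^ 2) := by
  have hmem : (Set.Ioo 0 π ×ˢ Set.univ : Set (ℝ × ℝ)) ∈ nhds (ω, φ) :=
    (isOpen_Ioo.prod isOpen_univ).mem_nhds ⟨hω, Set.mem_univ φ⟩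
  have hd : DifferentiableAt ℝ (fun p : ℝ × ℝ => r p.1 p.2) (ω, φ) :=
    (hC1.differentiableOn one_ne_zero).differentiableAt hmem
  have hrω : DifferentiableAt ℝ (fun w => r w φ) ω :=
    DifferentiableAt.comp (f := fun w : ℝ => (w, φ)) ω hd (by fun_prop)
  have hrφ : DifferentiableAt ℝ (fun p => r ω p) φ :=
    DifferentiableAt.comp (f := fun p : ℝ => (ω, p)) φ hd (by fun_prop)
  have e1 : deriv (fun w => x + r w φ • R (sphDir w φ)) ω =
      R (r ω φ • sphDirPolar ω φ + deriv (fun w => r w φ) ω • sphDir ω φ) := by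
    have h := (R.toContinuousLinearEquiv.hasFDerivAt.comp_hasDerivAt ω
      (hrω.hasDerivAt.smul (hasDerivAt_sphDir_polar ω φ))).const_add x
    simpa [Function.comp_def] using h.deriv
  have e2 : deriv (fun p => x + r ω p • R (sphDir ω p)) φ =
      R (r ω φ • sphDirAzimuth ω φ + deriv (fun p => r ω p) φ • sphDir ω φ) := by
    have h := (R.toContinuousLinearEquiv.hasFDerivAt.comp_hasDerivAt φ
      (hrφ.hasDerivAt.smul (hasDerivAt_sphDir_azimuth ω φ))).const_add x
    simpa [Function.comp_def] using h.deriv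
  have hr := (hpos ω hω φ).le
  rw [e1, e2, ← sq_eq_sq₀ (norm_nonneg _) (by positivity), norm_cross3_map_sq, gram_sphDir,
    mul_pow, Real.sq_sqrt (by positivity)]

end
end

section
/- Let x and d be distinct points of ℝ³, let ω ∈ (0,π) and α ∈ (0,ω), and let u ∈ ℝ³ be a unit vector with ∠(u, d−x) = α. Then the point y = x + ‖d−x‖ (sin(ω−α)/sin ω) · u satisfies ∠(x−y, d−y) = π − ω; that is, y lies on the spindle torus 𝔗(ω,d,x) determined by the angle condition at the scattering point. -/
/-!
Write `w = d - x`, `R = ‖w‖` and `r = R sin(ω-α)/sin ω`, so that `y - x = r u` and `d - y = w - r u`.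
Splitting `w - r u` into its components along and orthogonal to `u` gives
`⟪u, w - r u⟫ = R cos α - r = (R sin α / sin ω) cos ω`, while the orthogonal part has length
`R sin α`, whence `‖w - r u‖ = R sin α / sin ω` (the law of sines in the triangle `x, y, d`).
Hence `∠(u, w - r u) = ω`, and reversing `u` to point from `y` to `x` turns this into `π - ω`.
-/

open Real InnerProductGeometry

/-- The exterior angle at `y` of the triangle `x, y, d`, with `w = d - x`. -/
lemma angle_sub_smul_eq {V : Type*} [NormedAddCommGroup V] [InnerProductSpace ℝ V]
    {u w : V} {ω α : ℝ} (hw : w ≠ 0) (hω : ω ∈ Set.Ioo 0 π) (hα : α ∈ Set.Ioo 0 ω)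
    (hu : ‖u‖ = 1) (huw : angle u w = α) :
    angle u (w - (‖w‖ * (sin (ω - α) / sin ω)) • u) = ω := by
  obtain ⟨hω0, hωπ⟩ := hω
  obtain ⟨hα0, hαω⟩ := hα
  have hsω : 0 < sin ω := sin_pos_of_pos_of_lt_pi hω0 hωπ
  have hsα : 0 < sin α := sin_pos_of_pos_of_lt_pi hα0 (hαω.trans hωπ)
  have hR : 0 < ‖w‖ := norm_pos_iff.mpr hw
  have hinner : inner ℝ u w = cos α * ‖w‖ := by
    rw [← cos_angle_mul_norm_mul_norm, huw, hu, one_mul]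
  have hsub := sin_sub ω α
  set r := ‖w‖ * (sin (ω - α) / sin ω) with hr
  have hrω : r * sin ω = ‖w‖ * sin (ω - α) := by rw [hr]; field_simp
  have hin : inner ℝ u (w - r • u) = ‖w‖ * sin α / sin ω * cos ω := by
    rw [inner_sub_right, inner_smul_right, real_inner_self_eq_norm_sq, hu, hinner]
    field_simp
    linear_combination -hrω - ‖w‖ * hsub
  have hnorm : ‖w - r • u‖ = ‖w‖ * sin α / sin ω := by
    rw [← sq_eq_sq₀ (norm_nonneg _) (by positivity), norm_sub_sq_real, inner_smul_right,
      real_inner_comm, hinner, norm_smul, hu, mul_one, norm_eq_abs, sq_abs]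
    -- Completing the square: the component along `u` plus the orthogonal component.
    have hlong : (cos α * ‖w‖ - r) * sin ω = ‖w‖ * sin α * cos ω := by
      linear_combination -hrω - ‖w‖ * hsub
    rw [div_pow, eq_div_iff (by positivity)]
    linear_combination ((cos α * ‖w‖ - r) * sin ω + ‖w‖ * sin α * cos ω) * hlong
      - ‖w‖ ^ 2 * sin ω ^ 2 * sin_sq_add_cos_sq α
      + ‖w‖ ^ 2 * sin α ^ 2 * sin_sq_add_cos_sq ω
  rw [angle, hin, hnorm, hu, one_mul, mul_div_cancel_left₀ _ (by positivity),
    arccos_cos hω0.le hωπ.le]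

/-- Parametric representation of the spindle torus: for distinct `x, d`, `ω ∈ (0,π)`,
`α ∈ (0,ω)` and a unit vector `u` with `∠(u, d−x) = α`, the point
`y = x + ‖d−x‖ (sin(ω−α)/sin ω) u` satisfies `∠(x−y, d−y) = π − ω`. -/
theorem stmt14 (x d : EuclideanSpace ℝ (Fin 3)) (hxd : x ≠ d)
    (ω α : ℝ) (hω : ω ∈ Set.Ioo 0 π) (hα : α ∈ Set.Ioo 0 ω)
    (u : EuclideanSpace ℝ (Fin 3)) (hu : ‖u‖ = 1)
    (huangle : angle u (d - x) = α) :
    angle (x - (x + (‖d - x‖ * (Real.sin (ω - α) / Real.sin ω)) • u))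
        (d - (x + (‖d - x‖ * (Real.sin (ω - α) / Real.sin ω)) • u)) = π - ω := by
  have hw : d - x ≠ 0 := sub_ne_zero.mpr hxd.symm
  have hsω : 0 < sin ω := sin_pos_of_pos_of_lt_pi hω.1 hω.2
  have hs : 0 < sin (ω - α) :=
    sin_pos_of_pos_of_lt_pi (by linarith [hα.2]) (by linarith [hα.1, hω.2])
  have hR : 0 < ‖d - x‖ := norm_pos_iff.mpr hw
  rw [sub_add_cancel_left, ← sub_sub, angle_neg_left, angle_smul_left_of_pos _ _ (by positivity),
    angle_sub_smul_eq hw hω hα hu huangle]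
end
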